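/- arXiv:2205.12077 — 2 statements merged into one kernel-verified Lean document; each statement's English description precedes it below -/
import Mathlib

section
/- Assume λ > 0 and δ > 0, ρ > 0, and for each P > 0 let (β*(P), τ*(P)) be the unique saddle point of max_{β ≥ 0} min_{τ > 0} D(β,τ) with parameter P. Let s* = (√((δ − λ − 1)² + 4δλ) − δ + λ + 1)/(2δλ). Then, as P → ∞, τ*(P) converges to √ρ / √(δ − 1/(1 + λ·s*)²) and β*(P) converges to 2√ρ / (s*·√(δ − 1/(1 + λ·s*)²)). -/
open MeasureTheory ProbabilityTheory Filter

noncomputable section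

/-- Standard Gaussian `N(0,1)` measure on `ℝ`. -/
def stdGaussian : Measure ℝ := ProbabilityTheory.gaussianReal 0 1

/-- `Yfun P lam β τ = (β/α)·(E[(H − √P·α)²·1{H ≥ √P·α}] − 1/2)` with `α = 1/τ + 2λ/β`. -/
def Yfun (P lam β τ : ℝ) : ℝ :=
  (β / (1 / τ + 2 * lam / β)) *
    ((∫ h in Set.Ici (Real.sqrt P * (1 / τ + 2 * lam / β)),
        (h - Real.sqrt P * (1 / τ + 2 * lam / β)) ^ 2 ∂stdGaussian) - 1 / 2)

/-- `D(β,τ) = τβδ/2 + ρβ/(2τ) − β²/4 + Y(β,τ)`, with the convention `D(0,τ) = 0`. -/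
def Dfun (δ ρ P lam β τ : ℝ) : ℝ :=
  if β = 0 then 0
  else τ * β * δ / 2 + ρ * β / (2 * τ) - β ^ 2 / 4 + Yfun P lam β τ

/-- `(βs, τs)` is a saddle point of `max_{β ≥ 0} min_{τ > 0} D(β, τ)`:
`D(β,τs) ≤ D(βs,τs) ≤ D(βs,τ)` for all `β ≥ 0` and `τ > 0`. -/
def IsSaddle (δ ρ P lam βs τs : ℝ) : Prop :=
  0 ≤ βs ∧ 0 < τs ∧
  (∀ β, 0 ≤ β → Dfun δ ρ P lam β τs ≤ Dfun δ ρ P lam βs τs) ∧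
  (∀ τ, 0 < τ → Dfun δ ρ P lam βs τs ≤ Dfun δ ρ P lam βs τ)

end

/-- The Gaussian tail functional. -/
lemma gauss_tail_nonneg (x : ℝ) :
    0 ≤ ∫ h in Set.Ici x, (h - x) ^ 2 ∂stdGaussian :=
  integral_nonneg (fun h => sq_nonneg _)

lemma gauss_int4 : Integrable (fun h : ℝ => h ^ 4) stdGaussian := by
  have h := (memLp_id_gaussianReal (μ := 0) (v := 1) 4)
  have h2 := h.integrable_norm_pow (by norm_num)
  refine h2.congr (Eventually.of_forall fun x => ?_)
  simp only [id, Real.norm_eq_abs]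
  exact Even.pow_abs (by decide) x

lemma gauss_tail_le {x : ℝ} (hx : 0 < x) :
    (∫ h in Set.Ici x, (h - x) ^ 2 ∂stdGaussian) ≤ (∫ h, h ^ 4 ∂stdGaussian) / x ^ 2 := by
  have h1 : (∫ h in Set.Ici x, (h - x) ^ 2 ∂stdGaussian)
      ≤ ∫ h in Set.Ici x, h ^ 4 / x ^ 2 ∂stdGaussian := by
    apply integral_mono_of_nonneg
    · exact Eventually.of_forall fun h => sq_nonneg _
    · exact (gauss_int4.div_const _).integrableOn
    · refine (ae_restrict_iff' measurableSet_Ici).2 (Eventually.of_forall fun h hh => ?_)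
      have hh' : x ≤ h := hh
      show (h - x) ^ 2 ≤ h ^ 4 / x ^ 2
      rw [le_div_iff₀ (by positivity)]
      have e1 : (h - x) ^ 2 ≤ h ^ 2 := by nlinarith
      have e2 : x ^ 2 ≤ h ^ 2 := by nlinarith
      calc (h - x) ^ 2 * x ^ 2 ≤ h ^ 2 * h ^ 2 := by gcongr
        _ = h ^ 4 := by ring
  refine h1.trans ?_
  rw [← integral_div]
  apply setIntegral_le_integral (gauss_int4.div_const _)
  exact Eventually.of_forall fun h => by
    show 0 ≤ h ^ 4 / x ^ 2
    positivity

/-- The limit objective. -/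
noncomputable def Flim (δ ρ lam β τ : ℝ) : ℝ :=
  τ * β * δ / 2 + ρ * β / (2 * τ) - β ^ 2 / 4 - β ^ 2 * τ / (2 * (β + 2 * lam * τ))

lemma Dfun_eq {δ ρ P lam β τ : ℝ} (hlam : 0 < lam) (hβ : 0 < β) (hτ : 0 < τ) :
    Dfun δ ρ P lam β τ = Flim δ ρ lam β τ + (β / (1 / τ + 2 * lam / β)) *
      (∫ h in Set.Ici (Real.sqrt P * (1 / τ + 2 * lam / β)),
        (h - Real.sqrt P * (1 / τ + 2 * lam / β)) ^ 2 ∂stdGaussian) := by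
  have e : β / (1 / τ + 2 * lam / β) = β ^ 2 * τ / (β + 2 * lam * τ) := by
    have : β + 2 * lam * τ ≠ 0 := by positivity
    field_simp
  have e2 : β ^ 2 * τ / (2 * (β + 2 * lam * τ)) = (β ^ 2 * τ / (β + 2 * lam * τ)) / 2 := by
    have : β + 2 * lam * τ ≠ 0 := by positivity
    field_simp
  simp only [Dfun, Flim, Yfun, hβ.ne', if_false]
  rw [e, e2]; ring

lemma Dfun_ge {δ ρ P lam β τ : ℝ} (hlam : 0 < lam) (hβ : 0 < β) (hτ : 0 < τ) :
    Flim δ ρ lam β τ ≤ Dfun δ ρ P lam β τ := by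
  rw [Dfun_eq hlam hβ hτ]
  have := gauss_tail_nonneg (Real.sqrt P * (1 / τ + 2 * lam / β))
  have h2 : 0 ≤ β / (1 / τ + 2 * lam / β) := by positivity
  nlinarith [mul_nonneg h2 this]

lemma Dfun_le {δ ρ P lam β τ : ℝ} (hlam : 0 < lam) (hβ : 0 ≤ β) (hτ : 0 < τ) (hP : 0 < P) :
    Dfun δ ρ P lam β τ ≤ Flim δ ρ lam β τ + (∫ h, h ^ 4 ∂stdGaussian) * τ ^ 3 * β / P := by
  rcases hβ.eq_or_lt with h0 | hβ
  · subst h0; simp [Dfun, Flim]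
  rw [Dfun_eq hlam hβ hτ]
  have hM : 0 ≤ ∫ h, h ^ 4 ∂stdGaussian := integral_nonneg fun h => by
    show 0 ≤ h ^ 4
    positivity
  set M := ∫ h, h ^ 4 ∂stdGaussian
  set a := 1 / τ + 2 * lam / β with ha
  have ha1 : 1 / τ ≤ a := by
    have : 0 ≤ 2 * lam / β := by positivity
    linarith
  have ha0 : 0 < a := lt_of_lt_of_le (by positivity) ha1
  have hs : 0 < Real.sqrt P * a := mul_pos (Real.sqrt_pos.2 hP) ha0
  have ht := gauss_tail_le hs
  have hia : 1 / a ≤ τ := by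
    rw [div_le_iff₀ ha0]
    rw [div_le_iff₀ hτ] at ha1
    linarith
  have hia0 : 0 ≤ 1 / a := by positivity
  have : β / a * (∫ h in Set.Ici (Real.sqrt P * a), (h - Real.sqrt P * a) ^ 2 ∂stdGaussian)
      ≤ M * τ ^ 3 * β / P := by
    calc _ ≤ β / a * (M / (Real.sqrt P * a) ^ 2) := by gcongr
      _ = M * (1 / a) ^ 3 * β / P := by
        rw [mul_pow, Real.sq_sqrt hP.le]; field_simp
      _ ≤ M * τ ^ 3 * β / P := by gcongr
  linarith

lemma Flim_beta {δ ρ lam s t β : ℝ} (hlam : 0 < lam) (hs : 0 < s) (ht : 0 < t) (hβ : 0 ≤ β)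
    (h1 : δ = 1 / s + 1 / (1 + lam * s)) (h2 : ρ = t ^ 2 * (δ - 1 / (1 + lam * s) ^ 2)) :
    (β - 2 * t / s) ^ 2 / 4 ≤ Flim δ ρ lam (2 * t / s) t - Flim δ ρ lam β t := by
  have hc : 0 < 1 + lam * s := by positivity
  have hb : 0 < β + 2 * lam * t := by positivity
  have key : Flim δ ρ lam (2 * t / s) t - Flim δ ρ lam β t = (β - 2 * t / s) ^ 2 / 4 +
      t / 2 * ((2 * lam * t) ^ 2 * (β - 2 * t / s) ^ 2 /
        ((β + 2 * lam * t) * (2 * t / s + 2 * lam * t) ^ 2)) := by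
    have e : 2 * t / s + 2 * lam * t = 2 * t * (1 + lam * s) / s := by field_simp
    unfold Flim
    rw [e, h2, h1]
    field_simp
    ring
  rw [key]
  have : 0 ≤ t / 2 * ((2 * lam * t) ^ 2 * (β - 2 * t / s) ^ 2 /
        ((β + 2 * lam * t) * (2 * t / s + 2 * lam * t) ^ 2)) := by positivity
  linarith

lemma Flim_tau {δ ρ lam s t τ : ℝ} (hlam : 0 < lam) (hs : 0 < s) (ht : 0 < t) (hτ : 0 < τ)
    (h2 : ρ = t ^ 2 * (δ - 1 / (1 + lam * s) ^ 2)) :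
    ρ * (τ - t) ^ 2 / (s * t * τ) ≤ Flim δ ρ lam (2 * t / s) τ - Flim δ ρ lam (2 * t / s) t := by
  have hc : 0 < 1 + lam * s := by positivity
  have hb : 0 < t + s * lam * τ := by positivity
  have key : Flim δ ρ lam (2 * t / s) τ - Flim δ ρ lam (2 * t / s) t =
      ρ * (τ - t) ^ 2 / (s * t * τ) +
      lam * t * (τ - t) ^ 2 / ((t + s * lam * τ) * (1 + lam * s) ^ 2) := by
    have e : 2 * t / s + 2 * lam * t = 2 * t * (1 + lam * s) / s := by field_simp
    have e' : 2 * t / s + 2 * lam * τ = 2 * (t + s * lam * τ) / s := by field_simp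
    unfold Flim
    rw [e, e', h2]
    field_simp
    ring
  rw [key]
  have : 0 ≤ lam * t * (τ - t) ^ 2 / ((t + s * lam * τ) * (1 + lam * s) ^ 2) := by positivity
  linarith

lemma tendsto_of_sq_le {x : ℝ → ℝ} {a K : ℝ} (hK : 0 ≤ K)
    (h : ∀ᶠ P in atTop, (x P - a) ^ 2 ≤ K * x P / P) : Tendsto x atTop (nhds a) := by
  have hlim : Tendsto (fun P : ℝ => Real.sqrt ((K / P) ^ 2 + 2 * |a| * (K / P))) atTop (nhds 0) := by
    have h0 : Tendsto (fun P : ℝ => K / P) atTop (nhds 0) := tendsto_const_nhds.div_atTop tendsto_id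
    have := ((h0.pow 2).add (h0.const_mul (2 * |a|))).sqrt
    simpa using this
  rw [tendsto_iff_dist_tendsto_zero]
  refine squeeze_zero' (Eventually.of_forall fun _ => dist_nonneg) ?_ hlim
  filter_upwards [h, eventually_gt_atTop 0] with P hP hP0
  rw [Real.dist_eq]
  apply Real.abs_le_sqrt
  have hk : 0 ≤ K / P := by positivity
  have e : K * x P / P = (K / P) * x P := by ring
  rw [e] at hP
  nlinarith [mul_le_mul_of_nonneg_left (le_abs_self a) hk, sq_nonneg (x P - a - K / P)]

/-- for `λ > 0`, as `P → ∞`, the saddle point `(β*(P), τ*(P))` converges to the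
RZF limits expressed in terms of `s* = (√((δ−λ−1)² + 4δλ) − δ + λ + 1)/(2δλ)`. -/
theorem saddle_point_limit_P_infty_RZF (δ ρ lam : ℝ)
    (hδ : 0 < δ) (hρ : 0 < ρ) (hlam : 0 < lam)
    (βs τs : ℝ → ℝ)
    (hsad : ∀ P : ℝ, 0 < P → IsSaddle δ ρ P lam (βs P) (τs P)) :
    Tendsto τs atTop
      (nhds (Real.sqrt ρ / Real.sqrt (δ - 1 / (1 + lam *
        ((Real.sqrt ((δ - lam - 1) ^ 2 + 4 * δ * lam) - δ + lam + 1) / (2 * δ * lam))) ^ 2))) ∧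
    Tendsto βs atTop
      (nhds (2 * Real.sqrt ρ /
        (((Real.sqrt ((δ - lam - 1) ^ 2 + 4 * δ * lam) - δ + lam + 1) / (2 * δ * lam)) *
          Real.sqrt (δ - 1 / (1 + lam *
            ((Real.sqrt ((δ - lam - 1) ^ 2 + 4 * δ * lam) - δ + lam + 1) / (2 * δ * lam))) ^ 2)))) := by
  set R := Real.sqrt ((δ - lam - 1) ^ 2 + 4 * δ * lam) with hR
  have hR2 : R ^ 2 = (δ - lam - 1) ^ 2 + 4 * δ * lam := Real.sq_sqrt (by positivity)
  have hRgt : |δ - lam - 1| < R := by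
    apply Real.lt_sqrt_of_sq_lt
    rw [sq_abs]
    have : 0 < 4 * δ * lam := by positivity
    linarith
  set s := (R - δ + lam + 1) / (2 * δ * lam) with hsdef
  have hs : 0 < s := by
    apply div_pos _ (by positivity)
    have := le_abs_self (δ - lam - 1)
    linarith
  have hc : 0 < 1 + lam * s := by positivity
  have hRs : R = 2 * δ * lam * s + (δ - lam - 1) := by
    rw [hsdef]; field_simp; ring
  have hquad : δ * lam * s ^ 2 + (δ - lam - 1) * s - 1 = 0 := by
    rw [hRs] at hR2
    have h4 : (4 * δ * lam) * (δ * lam * s ^ 2 + (δ - lam - 1) * s - 1) = 0 := by linarith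
    rcases mul_eq_zero.1 h4 with h | h
    · have : 0 < 4 * δ * lam := by positivity
      linarith
    · exact h
  have h1 : δ = 1 / s + 1 / (1 + lam * s) := by
    field_simp
    linarith
  have hpos : 0 < δ - 1 / (1 + lam * s) ^ 2 := by
    have e : δ - 1 / (1 + lam * s) ^ 2 = 1 / s + lam * s / (1 + lam * s) ^ 2 := by
      rw [h1]; field_simp; ring
    rw [e]; positivity
  set Q := δ - 1 / (1 + lam * s) ^ 2 with hQ
  set t := Real.sqrt ρ / Real.sqrt Q with ht'
  have ht : 0 < t := div_pos (Real.sqrt_pos.2 hρ) (Real.sqrt_pos.2 hpos)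
  have h2 : ρ = t ^ 2 * (δ - 1 / (1 + lam * s) ^ 2) := by
    rw [← hQ, ht', div_pow, Real.sq_sqrt hρ.le, Real.sq_sqrt hpos.le]
    field_simp
  have eb : 2 * Real.sqrt ρ / (s * Real.sqrt Q) = 2 * t / s := by
    have : Real.sqrt Q ≠ 0 := (Real.sqrt_pos.2 hpos).ne'
    rw [ht']; field_simp
  rw [eb]
  have hM : 0 ≤ ∫ h, h ^ 4 ∂stdGaussian := integral_nonneg fun h => by
    show 0 ≤ h ^ 4
    positivity
  set M := ∫ h, h ^ 4 ∂stdGaussian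
  have hb0 : 0 < 2 * t / s := by positivity
  have main : ∀ P : ℝ, 0 < P → (βs P - 2 * t / s) ^ 2 / 4 + ρ * (τs P - t) ^ 2 / (s * t * τs P)
      ≤ M * t ^ 3 * βs P / P := by
    intro P hP
    obtain ⟨hβ, hτ, hA, hB⟩ := hsad P hP
    have a1 := hA (2 * t / s) hb0.le
    have a2 := hB t ht
    have a3 := Dfun_ge (δ := δ) (ρ := ρ) (P := P) hlam hb0 hτ
    have a4 := Dfun_le (δ := δ) (ρ := ρ) hlam hβ ht hP
    have a5 := Flim_beta hlam hs ht hβ h1 h2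
    have a6 := Flim_tau hlam hs ht hτ h2
    linarith
  have hβlim : Tendsto βs atTop (nhds (2 * t / s)) := by
    apply tendsto_of_sq_le (K := 4 * (M * t ^ 3)) (by positivity)
    filter_upwards [eventually_gt_atTop 0] with P hP
    have m := main P hP
    have hτ := (hsad P hP).2.1
    have : 0 ≤ ρ * (τs P - t) ^ 2 / (s * t * τs P) := by positivity
    have e : 4 * (M * t ^ 3) * βs P / P = 4 * (M * t ^ 3 * βs P / P) := by ring
    rw [e]; linarith
  refine ⟨?_, hβlim⟩
  apply tendsto_of_sq_le (K := M * t ^ 3 * (2 * t / s + 1) * (s * t) / ρ) (by positivity)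
  filter_upwards [eventually_gt_atTop 0, hβlim.eventually_lt_const (lt_add_one _)] with P hP hlt
  have m := main P hP
  have hτ := (hsad P hP).2.1
  have m2 : M * t ^ 3 * βs P / P ≤ M * t ^ 3 * (2 * t / s + 1) / P := by gcongr
  have m3 : ρ * (τs P - t) ^ 2 / (s * t * τs P) ≤ M * t ^ 3 * (2 * t / s + 1) / P := by
    have : 0 ≤ (βs P - 2 * t / s) ^ 2 / 4 := by positivity
    linarith
  rw [div_le_iff₀ (by positivity)] at m3
  have e : M * t ^ 3 * (2 * t / s + 1) * (s * t) / ρ * τs P / P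
      = M * t ^ 3 * (2 * t / s + 1) / P * (s * t * τs P) / ρ := by ring
  rw [e, le_div_iff₀ hρ]
  linarith
end

section
/- Assume δ > 0, P > 0 and λ ≥ 0 are fixed (with δ > 1 if λ = 0), and for each ρ > 0 let (β*(ρ), τ*(ρ)) be the unique saddle point of max_{β ≥ 0} min_{τ > 0} D(β,τ) with parameter ρ. Then, as ρ → ∞, τ*(ρ) = √(ρ/δ) + P/(2√(δρ)) + O(1/ρ) and β*(ρ) = 2√(ρδ) − 2√(2P)/√π + O(1/√ρ); that is, there exist constants C > 0 and ρ₀ > 0 such that for all ρ ≥ ρ₀, |τ*(ρ) − √(ρ/δ) − P/(2√(δρ))| ≤ C/ρ and |β*(ρ) − 2√(ρδ) + 2√(2P)/√π| ≤ C/√ρ. -/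
open MeasureTheory ProbabilityTheory Filter

/-- Standard Gaussian density. -/
noncomputable def ph (x : ℝ) : ℝ := (Real.sqrt (2 * Real.pi))⁻¹ * Real.exp (-x ^ 2 / 2)

/-- `∫_0^s` of the standard Gaussian density. -/
noncomputable def Ph (s : ℝ) : ℝ := ∫ x in (0:ℝ)..s, ph x

lemma ph_cont : Continuous ph := by unfold ph; fun_prop

lemma ph_pos (x : ℝ) : 0 < ph x := by unfold ph; positivity

lemma ph_deriv (x : ℝ) : HasDerivAt ph (-x * ph x) x := by
  have h : HasDerivAt (fun x : ℝ => -x ^ 2 / 2) (-x) x := by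
    have := ((hasDerivAt_pow 2 x).neg).div_const 2
    exact this.congr_deriv (by norm_num; ring)
  have h2 := (h.exp).const_mul (Real.sqrt (2 * Real.pi))⁻¹
  refine HasDerivAt.congr_deriv h2 ?_
  unfold ph
  ring

lemma Ph_deriv (s : ℝ) : HasDerivAt Ph (ph s) s :=
  (ph_cont.integral_hasStrictDerivAt 0 s).hasDerivAt

lemma ph_integrable : IntegrableOn ph (Set.Ioi 0) := by
  have h : ph = fun x => (Real.sqrt (2 * Real.pi))⁻¹ * Real.exp (-(1/2) * x ^ 2) := by
    funext x; unfold ph; congr 2; ring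
  rw [h]
  exact ((integrable_exp_neg_mul_sq (by norm_num)).const_mul _).integrableOn

lemma ph_integral : ∫ x in Set.Ioi (0:ℝ), ph x = 1 / 2 := by
  have h : ph = fun x => (Real.sqrt (2 * Real.pi))⁻¹ * Real.exp (-(1/2) * x ^ 2) := by
    funext x; unfold ph; congr 2; ring
  rw [h, integral_const_mul, integral_gaussian_Ioi]
  have : Real.pi / (1/2) = 2 * Real.pi := by ring
  rw [this]
  have : Real.sqrt (2 * Real.pi) ≠ 0 := by positivity
  field_simp

lemma Ph_tendsto : Tendsto Ph atTop (nhds (1/2)) := by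
  rw [← ph_integral]
  exact intervalIntegral_tendsto_integral_Ioi 0 ph_integrable tendsto_id

lemma Ph_mono : Monotone Ph :=
  monotone_of_hasDerivAt_nonneg (fun x => Ph_deriv x) (fun x => (ph_pos x).le)

lemma Ph_le (s : ℝ) : Ph s ≤ 1 / 2 := Ph_mono.ge_of_tendsto Ph_tendsto s

lemma ph_zero_le : ph 0 ≤ 1 / 2 := by
  unfold ph
  have h : (2:ℝ) ≤ Real.sqrt (2 * Real.pi) := by
    apply Real.le_sqrt_of_sq_le
    nlinarith [Real.pi_gt_three]
  have : (Real.sqrt (2 * Real.pi))⁻¹ ≤ 2⁻¹ := inv_anti₀ (by norm_num) h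
  simpa using this

lemma ph_le_zero (s : ℝ) : ph s ≤ ph 0 := by
  unfold ph
  have h : -s ^ 2 / 2 ≤ -0 ^ 2 / 2 := by nlinarith [sq_nonneg s]
  exact mul_le_mul_of_nonneg_left (Real.exp_le_exp.2 h) (by positivity)

lemma ph_ge (s : ℝ) : ph 0 - ph s ≤ ph 0 * (s ^ 2 / 2) := by
  have h : ph s = ph 0 * Real.exp (-s ^ 2 / 2) := by unfold ph; simp
  have := Real.add_one_le_exp (-s ^ 2 / 2)
  rw [h]
  nlinarith [ph_pos 0]

lemma Ph_zero : Ph 0 = 0 := by simp [Ph]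

lemma Ph_le_mul {s : ℝ} (hs : 0 ≤ s) : Ph s ≤ s * ph 0 := by
  have hm : Monotone (fun x => x * ph 0 - Ph x) := by
    apply monotone_of_hasDerivAt_nonneg (f' := fun x => 1 * ph 0 - ph x)
    · intro x
      exact ((hasDerivAt_id x).mul_const _).sub (Ph_deriv x)
    · intro x
      have := ph_le_zero x
      simp; linarith
  have := hm hs
  simp [Ph_zero] at this
  linarith

lemma mul_le_Ph {s : ℝ} (hs : 0 ≤ s) : s * ph s ≤ Ph s := by
  have hm : Monotone (fun x => Ph x - x * ph x) := by
    apply monotone_of_hasDerivAt_nonneg (f' := fun x => ph x - (1 * ph x + x * (-x * ph x)))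
    · intro x
      exact (Ph_deriv x).sub ((hasDerivAt_id x).mul (ph_deriv x))
    · intro x
      have := mul_nonneg (sq_nonneg x) (ph_pos x).le
      simp; nlinarith
  have := hm hs
  simp [Ph_zero] at this
  linarith

lemma lin_ph_tendsto (c : ℝ) : Tendsto (fun x => (x - c) * ph x) atTop (nhds 0) := by
  have key : ∀ s : ℝ, Tendsto (fun x => x ^ s * Real.exp (-(1/2) * x ^ 2)) atTop (nhds 0) := by
    intro s
    refine (rpow_mul_exp_neg_mul_sq_isLittleO_exp_neg (by norm_num) s).isBigO.trans_tendsto ?_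
    apply Real.tendsto_exp_atBot.comp
    exact tendsto_id.const_mul_atTop_of_neg (by norm_num)
  have h := ((key 1).sub ((key 0).const_mul c)).const_mul (Real.sqrt (2 * Real.pi))⁻¹
  simp only [Real.rpow_one, Real.rpow_zero, mul_zero, sub_zero] at h
  refine h.congr ?_
  intro x
  unfold ph
  rw [show -x ^ 2 / 2 = -(1/2) * x ^ 2 by ring]
  ring

lemma N_deriv (s x : ℝ) :
    HasDerivAt (fun x => (1 + s ^ 2) * Ph x - (x - 2 * s) * ph x) ((x - s) ^ 2 * ph x) x := by
  have := ((Ph_deriv x).const_mul (1 + s ^ 2)).sub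
    (((hasDerivAt_id x).sub_const (2 * s)).mul (ph_deriv x))
  refine HasDerivAt.congr_deriv this ?_
  simp; ring

lemma N_tendsto (s : ℝ) :
    Tendsto (fun x => (1 + s ^ 2) * Ph x - (x - 2 * s) * ph x) atTop
      (nhds ((1 + s ^ 2) * (1 / 2) - 0)) :=
  (Ph_tendsto.const_mul _).sub (lin_ph_tendsto (2 * s))

lemma N_integrable (s a : ℝ) : IntegrableOn (fun x => (x - s) ^ 2 * ph x) (Set.Ioi a) :=
  integrableOn_Ioi_deriv_of_nonneg' (fun x _ => N_deriv s x)
    (fun x _ => mul_nonneg (sq_nonneg _) (ph_pos x).le) (N_tendsto s)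

lemma N_integral (s : ℝ) : ∫ x in Set.Ioi s, (x - s) ^ 2 * ph x =
    (1 + s ^ 2) * (1 / 2 - Ph s) - s * ph s := by
  rw [integral_Ioi_of_hasDerivAt_of_nonneg' (fun x _ => N_deriv s x)
    (fun x _ => mul_nonneg (sq_nonneg _) (ph_pos x).le) (N_tendsto s)]
  ring

lemma gauss_integral (s : ℝ) : ∫ h in Set.Ici s, (h - s) ^ 2 ∂stdGaussian =
    (1 + s ^ 2) * (1 / 2 - Ph s) - s * ph s := by
  rw [← N_integral, _root_.stdGaussian, gaussianReal_of_var_ne_zero _ one_ne_zero,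
    setIntegral_withDensity_eq_setIntegral_toReal_smul (measurable_gaussianPDF 0 1)
    (ae_of_all _ fun _ => gaussianPDF_lt_top) _ measurableSet_Ici, integral_Ici_eq_integral_Ioi]
  congr 1
  funext x
  rw [toReal_gaussianPDF, gaussianPDFReal_def]
  simp [ph]
  ring

lemma g_le {s : ℝ} (hs : 0 ≤ s) : (1 + s ^ 2) * (1 / 2 - Ph s) - s * ph s ≤ 1 / 2 := by
  have h0 := N_integral 0
  simp only [Ph_zero] at h0
  have h0' : ∫ x in Set.Ioi (0:ℝ), (x - 0) ^ 2 * ph x = 1 / 2 := by rw [h0]; ring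
  rw [← N_integral, ← h0']
  refine (setIntegral_mono_on (N_integrable s s) (N_integrable 0 s) measurableSet_Ioi ?_).trans ?_
  · intro x hx
    have hx : s < x := hx
    have := (ph_pos x).le
    gcongr
  · refine setIntegral_mono_set (N_integrable 0 0) ?_ ?_
    · exact ae_of_all _ fun x => mul_nonneg (sq_nonneg _) (ph_pos x).le
    · exact (Set.Ioi_subset_Ioi hs).eventuallyLE

/-- `G s = (g s - 1/2)/s`. -/
noncomputable def Gf (s : ℝ) : ℝ := s / 2 - (1 + s ^ 2) * Ph s / s - ph s

/-- derivative of `G`. -/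
noncomputable def Gd (s : ℝ) : ℝ := 1 / 2 - Ph s + (Ph s - s * ph s) / s ^ 2

lemma Gf_deriv {s : ℝ} (hs : 0 < s) : HasDerivAt Gf (Gd s) s := by
  have h1 := ((hasDerivAt_pow 2 s).const_add 1).mul (Ph_deriv s)
  have h := (((hasDerivAt_id s).div_const 2).sub (h1.div (hasDerivAt_id s) hs.ne')).sub (ph_deriv s)
  refine HasDerivAt.congr_deriv h ?_
  unfold Gd
  simp
  field_simp
  ring

lemma Gd_nonneg {s : ℝ} (hs : 0 < s) : 0 ≤ Gd s := by
  unfold Gd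
  have := Ph_le s
  have h2 : 0 ≤ (Ph s - s * ph s) / s ^ 2 :=
    div_nonneg (by linarith [mul_le_Ph hs.le]) (sq_nonneg _)
  linarith

lemma Gd_bound {s : ℝ} (hs : 0 < s) : |Gd s - 1 / 2| ≤ s := by
  have h1 := Ph_le_mul hs.le
  have h2 := mul_le_Ph hs.le
  have h3 := ph_ge s
  have h4 := ph_zero_le
  have h5 := mul_pos hs (ph_pos s)
  have h6 : 0 ≤ (Ph s - s * ph s) / s ^ 2 := div_nonneg (by linarith) (sq_nonneg _)
  have h7 : (Ph s - s * ph s) / s ^ 2 ≤ s / 2 := by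
    rw [div_le_iff₀ (by positivity)]
    have : s * (ph 0 - ph s) ≤ s * (ph 0 * (s ^ 2 / 2)) := by gcongr
    have h8 : s * (ph 0 * (s ^ 2 / 2)) ≤ s * (1 / 2 * (s ^ 2 / 2)) := by gcongr
    have : 0 < s ^ 3 := by positivity
    nlinarith
  have h9 : s * ph 0 ≤ s * (1 / 2) := by gcongr
  unfold Gd
  rw [abs_le]
  constructor <;> linarith

lemma Gf_eq {s : ℝ} (hs : 0 < s) :
    ((1 + s ^ 2) * (1 / 2 - Ph s) - s * ph s - 1 / 2) / s = Gf s := by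
  unfold Gf
  field_simp
  ring

lemma Gf_nonpos {s : ℝ} (hs : 0 < s) : Gf s ≤ 0 := by
  rw [← Gf_eq hs]
  exact div_nonpos_of_nonpos_of_nonneg (by linarith [g_le hs.le]) hs.le

lemma Gf_split {s : ℝ} (hs : 0 < s) : Gf s = s * (1 / 2 - Ph s) - Ph s / s - ph s := by
  unfold Gf
  field_simp
  ring

lemma Gf_ge {s : ℝ} (hs : 0 < s) : -(2 * ph 0) ≤ Gf s := by
  rw [Gf_split hs]
  have h1 : 0 ≤ s * (1 / 2 - Ph s) := mul_nonneg hs.le (by linarith [Ph_le s])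
  have h2 : Ph s / s ≤ ph 0 := by
    rw [div_le_iff₀ hs]; linarith [Ph_le_mul hs.le]
  linarith [ph_le_zero s]

lemma Gf_bound {s : ℝ} (hs : 0 < s) (hs1 : s ≤ 1) : |Gf s + 2 * ph 0| ≤ s := by
  rw [abs_of_nonneg (by linarith [Gf_ge hs]), Gf_split hs]
  have h2 : ph s ≤ Ph s / s := by
    rw [le_div_iff₀ hs]; linarith [mul_le_Ph hs.le]
  have h3 := ph_ge s
  have h0 : 0 ≤ Ph s := le_trans (mul_pos hs (ph_pos s)).le (mul_le_Ph hs.le)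
  have h1 : s * (1 / 2 - Ph s) ≤ s * (1 / 2) := by gcongr; linarith
  have h4 : ph 0 * (s ^ 2 / 2) ≤ 1 / 2 * (s ^ 2 / 2) := by gcongr; exact ph_zero_le
  nlinarith

lemma Y_eq {P lam β τ : ℝ} (hP : 0 < P) (hl : 0 ≤ lam) (hβ : 0 < β) (hτ : 0 < τ) :
    Yfun P lam β τ = β * (√P * Gf (√P * (1 / τ + 2 * lam / β))) := by
  have hα : 0 < 1 / τ + 2 * lam / β := by positivity
  unfold Yfun
  rw [gauss_integral, ← Gf_eq (s := √P * (1 / τ + 2 * lam / β)) (by positivity)]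
  have : √P ≠ 0 := by positivity
  field_simp

lemma D_eq {δ ρ P lam β τ : ℝ} (hP : 0 < P) (hl : 0 ≤ lam) (hβ : 0 < β) (hτ : 0 < τ) :
    Dfun δ ρ P lam β τ = τ * β * δ / 2 + ρ * β / (2 * τ) - β ^ 2 / 4
      + β * (√P * Gf (√P * (1 / τ + 2 * lam / β))) := by
  unfold Dfun
  rw [if_neg hβ.ne', Y_eq hP hl hβ hτ]

lemma stat_tau {δ ρ P lam β τ : ℝ} (hP : 0 < P) (hl : 0 ≤ lam) (hβ : 0 < β)
    (h : IsSaddle δ ρ P lam β τ) :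
    τ ^ 2 * δ = ρ + 2 * (P * Gd (√P * (1 / τ + 2 * lam / β))) := by
  obtain ⟨-, hτ, -, h2⟩ := h
  have hmin : IsLocalMin (fun t => t * β * δ / 2 + ρ * β / (2 * t) - β ^ 2 / 4
      + β * (√P * Gf (√P * (1 / t + 2 * lam / β)))) τ := by
    filter_upwards [lt_mem_nhds hτ] with t ht
    rw [← D_eq hP hl hβ hτ, ← D_eq hP hl hβ ht]
    exact h2 t ht
  have hα : 0 < √P * (1 / τ + 2 * lam / β) := by positivity
  have e1 : HasDerivAt (fun t : ℝ => √P * (1 / t + 2 * lam / β)) (√P * (-(1 / τ ^ 2))) τ := by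
    have := (((hasDerivAt_inv hτ.ne').add_const (2 * lam / β)).const_mul (√P))
    simpa [one_div] using this
  have e2 : HasDerivAt (fun t : ℝ => Gf (√P * (1 / t + 2 * lam / β)))
    (Gd (√P * (1 / τ + 2 * lam / β)) * (√P * (-(1 / τ ^ 2)))) τ := HasDerivAt.comp (h₂ := Gf) τ (Gf_deriv hα) e1
  have e3 : HasDerivAt (fun t : ℝ => t * β * δ / 2 + ρ * β / (2 * t) - β ^ 2 / 4)
      (β * δ / 2 - ρ * β / (2 * τ ^ 2)) τ := by
    have a := (((hasDerivAt_id τ).mul_const (β * δ / 2)).add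
      ((hasDerivAt_inv hτ.ne').const_mul (ρ * β / 2))).sub_const (β ^ 2 / 4)
    refine (a.congr_deriv ?_).congr_of_eventuallyEq ?_
    · field_simp
      ring
    · refine Eventually.of_forall fun t => ?_
      simp only [id, Pi.add_apply]
      rw [div_mul_eq_div_div, div_eq_mul_inv _ t]
      ring
  have e4 := hmin.hasDerivAt_eq_zero (e3.add ((e2.const_mul (√P)).const_mul β))
  have hs : √P * √P = P := Real.mul_self_sqrt hP.le
  generalize Gd (√P * (1 / τ + 2 * lam / β)) = g at *
  have e5 : β * δ / 2 - ρ * β / (2 * τ ^ 2) - β * ((√P * √P) * g) / τ ^ 2 = 0 := by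
    rw [← e4]; ring
  rw [hs] at e5
  field_simp at e5
  rw [mul_zero] at e5
  rcases mul_eq_zero.1 e5 with e6 | e6
  · exact absurd e6 hβ.ne'
  · linarith

lemma stat_beta {δ ρ P lam β τ : ℝ} (hP : 0 < P) (hl : 0 ≤ lam) (hβ : 0 < β)
    (h : IsSaddle δ ρ P lam β τ) :
    β = τ * δ + ρ / τ + 2 * (√P * Gf (√P * (1 / τ + 2 * lam / β)))
      - 4 * lam / β * (P * Gd (√P * (1 / τ + 2 * lam / β))) := by
  obtain ⟨-, hτ, h1, -⟩ := h
  have hmax : IsLocalMax (fun b => τ * b * δ / 2 + ρ * b / (2 * τ) - b ^ 2 / 4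
      + b * (√P * Gf (√P * (1 / τ + 2 * lam / b)))) β := by
    filter_upwards [lt_mem_nhds hβ] with b hb
    rw [← D_eq hP hl hβ hτ, ← D_eq hP hl hb hτ]
    exact h1 b (le_of_lt hb)
  have hα : 0 < √P * (1 / τ + 2 * lam / β) := by positivity
  have e1 : HasDerivAt (fun t : ℝ => √P * (1 / τ + 2 * lam / t))
      (√P * (2 * lam * (-(1 / β ^ 2)))) β := by
    have := ((((hasDerivAt_inv hβ.ne').const_mul (2 * lam)).const_add (1 / τ)).const_mul (√P))
    simpa [one_div, div_eq_mul_inv] using this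
  have e2 : HasDerivAt (fun t : ℝ => Gf (√P * (1 / τ + 2 * lam / t)))
    (Gd (√P * (1 / τ + 2 * lam / β)) * (√P * (2 * lam * (-(1 / β ^ 2))))) β :=
      HasDerivAt.comp (h₂ := Gf) β (Gf_deriv hα) e1
  have e3 : HasDerivAt (fun b : ℝ => τ * b * δ / 2 + ρ * b / (2 * τ) - b ^ 2 / 4)
      (τ * δ / 2 + ρ / (2 * τ) - β / 2) β := by
    have a := ((hasDerivAt_id β).mul_const (τ * δ / 2 + ρ / (2 * τ))).sub
      ((hasDerivAt_pow 2 β).div_const 4)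
    refine (a.congr_deriv ?_).congr_of_eventuallyEq ?_
    · simp
      ring
    · refine Eventually.of_forall fun t => ?_
      simp only [id, Pi.sub_apply]
      ring
  have e4 := hmax.hasDerivAt_eq_zero (e3.add ((hasDerivAt_id β).mul (e2.const_mul (√P))))
  have hs : √P * √P = P := Real.mul_self_sqrt hP.le
  simp only [id] at e4
  generalize Gd (√P * (1 / τ + 2 * lam / β)) = g at *
  generalize Gf (√P * (1 / τ + 2 * lam / β)) = f at *
  have e5 : τ * δ / 2 + ρ / (2 * τ) - β / 2 + √P * f
      - β * ((√P * √P) * g) * (2 * lam) / β ^ 2 = 0 := by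
    rw [← e4]; ring
  rw [hs] at e5
  have e6 : β * (P * g) * (2 * lam) / β ^ 2 = 2 * lam / β * (P * g) := by
    field_simp
  have e7 : ρ / (2 * τ) = ρ / τ / 2 := by rw [div_div, mul_comm]
  have e8 : 4 * lam / β * (P * g) = 2 * (2 * lam / β * (P * g)) := by ring
  rw [e6, e7] at e5
  rw [e8]
  linarith

lemma D_upper {δ ρ P lam β τ : ℝ} (hP : 0 < P) (hl : 0 ≤ lam) (hβ : 0 < β) (hτ : 0 < τ) :
    Dfun δ ρ P lam β τ ≤ β * (τ * δ + ρ / τ) / 2 - β ^ 2 / 4 := by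
  rw [D_eq hP hl hβ hτ]
  have hα : 0 < √P * (1 / τ + 2 * lam / β) := by positivity
  have := mul_nonpos_of_nonneg_of_nonpos hβ.le
    (mul_nonpos_of_nonneg_of_nonpos (Real.sqrt_nonneg P) (Gf_nonpos hα))
  have e7 : ρ * β / (2 * τ) = β * (ρ / τ) / 2 := by field_simp
  rw [e7]
  linarith

lemma D_lower {δ ρ P lam β τ : ℝ} (hP : 0 < P) (hl : 0 ≤ lam) (hβ : 0 < β) (hτ : 0 < τ) :
    β * (τ * δ + ρ / τ) / 2 - β ^ 2 / 4 - β * √P ≤ Dfun δ ρ P lam β τ := by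
  rw [D_eq hP hl hβ hτ]
  have hα : 0 < √P * (1 / τ + 2 * lam / β) := by positivity
  have h1 : -1 ≤ Gf (√P * (1 / τ + 2 * lam / β)) := by linarith [Gf_ge hα, ph_zero_le]
  have : β * (√P * (-1)) ≤ β * (√P * Gf (√P * (1 / τ + 2 * lam / β))) := by gcongr
  have e7 : ρ * β / (2 * τ) = β * (ρ / τ) / 2 := by field_simp
  rw [e7]
  linarith

lemma beta_lower {δ ρ P lam β τ A : ℝ} (hP : 0 < P) (hl : 0 ≤ lam)
    (h : IsSaddle δ ρ P lam β τ) (hA : A = τ * δ + ρ / τ) (hA' : 16 * √P ≤ A) :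
    A / 2 ≤ β := by
  obtain ⟨hβ0, hτ, h1, -⟩ := h
  have hp : 0 < √P := by positivity
  have hA0 : 0 < A := by linarith
  have h2 := (D_lower (δ := δ) (ρ := ρ) hP hl hA0 hτ).trans (h1 A hA0.le)
  rw [← hA] at h2
  have h3 : A ^ 2 * 3 / 16 ≤ A * A / 2 - A ^ 2 / 4 - A * √P := by nlinarith
  rcases hβ0.eq_or_lt with h0 | hβ
  · exfalso
    rw [← h0] at h2
    simp only [Dfun, if_true] at h2
    nlinarith [pow_pos hA0 2]
  · have h4 := D_upper (δ := δ) (ρ := ρ) hP hl hβ hτ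
    rw [← hA] at h4
    by_contra hc
    push Not at hc
    nlinarith

lemma final_tau {d p M r τ x α : ℝ} (hd : 0 < d) (hp : 0 < p)
    (hM : 0 < M) (hr : 1 ≤ r) (hτ : 0 < τ) (hx0 : 0 ≤ x)
    (h1 : τ ^ 2 * d ^ 2 = r ^ 2 + 2 * x) (hx : |x - p ^ 2 / 2| ≤ p ^ 3 * α) (hα : α ≤ M / r) :
    |τ - (r / d + p ^ 2 / (2 * (d * r)))| ≤ (2 * p ^ 3 * M + p ^ 4) / d / r ^ 2 := by
  have hr0 : 0 < r := by linarith
  have hx' : |x - p ^ 2 / 2| ≤ p ^ 3 * (M / r) := hx.trans (by gcongr)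
  have hτr : r ≤ τ * d := by
    apply le_of_sq_le_sq _ (by positivity)
    nlinarith
  set T := r / d + p ^ 2 / (2 * (d * r)) with hT
  have hT0 : 0 < T := by positivity
  have hTe : T ^ 2 * d ^ 2 = r ^ 2 + p ^ 2 + p ^ 4 / (4 * r ^ 2) := by
    rw [hT]; field_simp; ring
  have e1 : (τ - T) * (d ^ 2 * (τ + T)) = 2 * (x - p ^ 2 / 2) - p ^ 4 / (4 * r ^ 2) := by
    linear_combination h1 - hTe
  have e2 : p ^ 4 / (4 * r ^ 2) ≤ p ^ 4 / r := by
    gcongr; nlinarith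
  have e2' : 0 < p ^ 4 / (4 * r ^ 2) := by positivity
  have e3 : |(τ - T) * (d ^ 2 * (τ + T))| ≤ (2 * p ^ 3 * M + p ^ 4) / r := by
    have : (2 * p ^ 3 * M + p ^ 4) / r = 2 * (p ^ 3 * (M / r)) + p ^ 4 / r := by ring
    rw [e1, this]
    rw [abs_le] at hx' ⊢
    constructor <;> linarith [hx'.1, hx'.2]
  have e4 : d * r ≤ d ^ 2 * (τ + T) := by nlinarith [mul_pos (pow_pos hd 2) hT0]
  rw [abs_mul, abs_of_nonneg (by positivity : 0 ≤ d ^ 2 * (τ + T))] at e3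
  have e5 : |τ - T| * (d * r) ≤ (2 * p ^ 3 * M + p ^ 4) / r :=
    (mul_le_mul_of_nonneg_left e4 (abs_nonneg _)).trans e3
  rw [← le_div_iff₀ (by positivity)] at e5
  refine e5.trans (le_of_eq ?_)
  field_simp

lemma final_beta {d p M lam c r τ β x f α : ℝ} (hd : 0 < d) (hp : 0 < p) (hl : 0 ≤ lam)
    (hM : 0 < M) (hr : 1 ≤ r) (hτ : 0 < τ) (hβ : r * d ≤ β) (hx0 : 0 ≤ x)
    (h1 : τ ^ 2 * d ^ 2 = r ^ 2 + 2 * x) (hx : |x - p ^ 2 / 2| ≤ p ^ 3 * α) (hα : α ≤ M / r)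
    (hf : |f + c| ≤ p ^ 2 * α)
    (h2 : β = τ * d ^ 2 + r ^ 2 / τ + 2 * f - 4 * lam / β * x) :
    |β - (2 * (r * d) - 2 * c)| ≤
      (4 * (p ^ 2 + p ^ 3 * M) ^ 2 * d + 2 * p ^ 2 * M + 4 * lam / d * (p ^ 2 + p ^ 3 * M)) / r := by
  have hr0 : 0 < r := by linarith
  have hMr : M / r ≤ M := div_le_self hM.le hr
  have hX : x ≤ p ^ 2 + p ^ 3 * M := by
    have h : p ^ 3 * α ≤ p ^ 3 * M := by gcongr; linarith
    have := (abs_le.1 hx).2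
    nlinarith [sq_nonneg p]
  set X := p ^ 2 + p ^ 3 * M with hXd
  have hX0 : 0 < X := by positivity
  have hτr : r ≤ τ * d := by
    apply le_of_sq_le_sq _ (by positivity)
    nlinarith
  have a1 : τ * d ^ 2 + r ^ 2 / τ - 2 * (r * d) = (τ * d - r) ^ 2 / τ := by
    field_simp; ring
  have a2 : (τ * d - r) * r ≤ 2 * X := by nlinarith
  have a3 : τ * d - r ≤ 2 * X / r := by rwa [le_div_iff₀ hr0]
  have a4 : (τ * d - r) ^ 2 / τ ≤ 4 * X ^ 2 * d / r := by
    have b1 : (τ * d - r) ^ 2 ≤ (2 * X) ^ 2 := by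
      apply pow_le_pow_left₀ (by linarith)
      exact a3.trans (div_le_self (by positivity) hr)
    rw [div_le_div_iff₀ hτ hr0]
    have : (τ * d - r) ^ 2 * r ≤ (2 * X) ^ 2 * (τ * d) := by gcongr
    linarith
  have a5 : 0 ≤ (τ * d - r) ^ 2 / τ := by positivity
  have hβ0 : 0 < β := lt_of_lt_of_le (by positivity) hβ
  have a6 : 4 * lam / β * x ≤ 4 * lam / d * X / r := by
    have : 4 * lam / β * x ≤ 4 * lam / (r * d) * X := by gcongr
    refine this.trans (le_of_eq ?_)
    field_simp
  have a7 : 0 ≤ 4 * lam / β * x := by positivity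
  have hf' : |f + c| ≤ p ^ 2 * M / r := by
    refine hf.trans ?_
    rw [mul_div_assoc]; gcongr
  have e : β - (2 * (r * d) - 2 * c) = (τ * d - r) ^ 2 / τ + 2 * (f + c) - 4 * lam / β * x := by
    rw [← a1]; linarith
  have e' : (4 * X ^ 2 * d + 2 * p ^ 2 * M + 4 * lam / d * X) / r
    = 4 * X ^ 2 * d / r + 2 * (p ^ 2 * M / r) + 4 * lam / d * X / r := by ring
  rw [e, e']
  have a8 : 0 ≤ 4 * X ^ 2 * d / r := by positivity
  rw [abs_le] at hf' ⊢
  constructor <;> linarith [hf'.1, hf'.2]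

lemma c_eq {P : ℝ} : 2 * √(2 * P) / √Real.pi = 2 * (√P * (2 * ph 0)) := by
  have h : ph 0 = (√2 * √Real.pi)⁻¹ := by
    unfold ph; rw [Real.sqrt_mul (by norm_num)]; simp
  rw [h, Real.sqrt_mul (by norm_num)]
  have h2 : √2 * √2 = (2:ℝ) := Real.mul_self_sqrt (by norm_num)
  have : √Real.pi ≠ 0 := by have := Real.pi_pos; positivity
  have : √(2:ℝ) ≠ 0 := by positivity
  field_simp
  linear_combination √P * h2

set_option maxHeartbeats 2000000 in
/-- as `ρ → ∞`, `τ*(ρ) = √(ρ/δ) + P/(2√(δρ)) + O(1/ρ)` and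
`β*(ρ) = 2√(ρδ) − 2√(2P)/√π + O(1/√ρ)`. -/
theorem saddle_point_expansion_rho_infty (δ P lam : ℝ)
    (hδ : 0 < δ) (hP : 0 < P) (hlam : 0 ≤ lam)
    (hcase : 0 < lam ∨ (lam = 0 ∧ 1 < δ))
    (βs τs : ℝ → ℝ)
    (hsad : ∀ ρ : ℝ, 0 < ρ → IsSaddle δ ρ P lam (βs ρ) (τs ρ)) :
    ∃ C > (0 : ℝ), ∃ ρ₀ > (0 : ℝ), ∀ ρ : ℝ, ρ₀ ≤ ρ →
      |τs ρ - (Real.sqrt (ρ / δ) + P / (2 * Real.sqrt (δ * ρ)))| ≤ C / ρ ∧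
      |βs ρ - (2 * Real.sqrt (ρ * δ) - 2 * Real.sqrt (2 * P) / Real.sqrt Real.pi)| ≤
        C / Real.sqrt ρ := by
  have hd : 0 < √δ := by positivity
  have hp : 0 < √P := by positivity
  have hdd : √δ ^ 2 = δ := Real.sq_sqrt hδ.le
  have hpp : √P ^ 2 = P := Real.sq_sqrt hP.le
  set d := √δ with hdef
  set p := √P with hpdef
  set M := d + 2 * lam / d with hM
  have hM0 : 0 < M := by positivity
  set C1 := (2 * p ^ 3 * M + p ^ 4) / d with hC1
  set C2 := 4 * (p ^ 2 + p ^ 3 * M) ^ 2 * d + 2 * p ^ 2 * M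
    + 4 * lam / d * (p ^ 2 + p ^ 3 * M) with hC2
  have hC1' : 0 < C1 := by positivity
  have hC2' : 0 < C2 := by positivity
  set r0 := 1 + 8 * p / d + p * M with hr0
  have hr0' : 0 < r0 := by positivity
  refine ⟨C1 + C2, by positivity, r0 ^ 2, by positivity, fun ρ hρ => ?_⟩
  have hρ0 : 0 < ρ := lt_of_lt_of_le (by positivity) hρ
  have hrr : √ρ ^ 2 = ρ := Real.sq_sqrt hρ0.le
  have hr : r0 ≤ √ρ := Real.le_sqrt_of_sq_le hρ
  have e1 : √(ρ / δ) = √ρ / d := Real.sqrt_div hρ0.le δ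
  have e2 : √(δ * ρ) = d * √ρ := Real.sqrt_mul hδ.le ρ
  have e3 : √(ρ * δ) = √ρ * d := Real.sqrt_mul hρ0.le δ
  rw [c_eq, e1, e2, e3, ← hpdef]
  have hS := hsad ρ hρ0
  set r := √ρ with hrdef
  set β := βs ρ
  set τ := τs ρ
  have hpd : 0 ≤ 8 * p / d := by positivity
  have hpM : 0 ≤ p * M := by positivity
  have hr1 : 1 ≤ r := by linarith
  have hrpos : 0 < r := by linarith
  have hτ : 0 < τ := hS.2.1
  have hA : 2 * (r * d) ≤ τ * δ + ρ / τ := by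
    have : τ * d ^ 2 + r ^ 2 / τ - 2 * (r * d) = (τ * d - r) ^ 2 / τ := by
      field_simp; ring
    have h0 : 0 ≤ (τ * d - r) ^ 2 / τ := by positivity
    rw [← hdd, ← hrr]; linarith
  have hA16 : 16 * p ≤ τ * δ + ρ / τ := by
    have : 8 * p / d ≤ r := by linarith
    rw [div_le_iff₀ hd] at this
    linarith
  have hβ : r * d ≤ β := by
    have := beta_lower hP hlam hS rfl hA16
    linarith
  have hβ0 : 0 < β := lt_of_lt_of_le (by positivity) hβ
  have h1 := stat_tau hP hlam hβ0 hS
  have h2 := stat_beta hP hlam hβ0 hS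
  rw [← hpdef] at h1 h2
  set α := 1 / τ + 2 * lam / β with hαd
  have hα0 : 0 < α := by positivity
  clear_value α β τ r d p
  have hs0 : 0 < p * α := by positivity
  have hx0 : 0 ≤ P * Gd (p * α) := mul_nonneg hP.le (Gd_nonneg hs0)
  have hx : |P * Gd (p * α) - p ^ 2 / 2| ≤ p ^ 3 * α := by
    have : P * Gd (p * α) - p ^ 2 / 2 = p ^ 2 * (Gd (p * α) - 1 / 2) := by rw [← hpp]; ring
    rw [this, abs_mul, abs_of_pos (by positivity : 0 < p ^ 2)]
    have := mul_le_mul_of_nonneg_left (Gd_bound hs0) (by positivity : 0 ≤ p ^ 2)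
    linarith
  have hτr : r ≤ τ * d := by
    apply le_of_sq_le_sq _ (by positivity)
    rw [← hdd] at h1
    nlinarith
  have hα : α ≤ M / r := by
    have a : 1 / τ ≤ d / r := by
      rw [div_le_div_iff₀ hτ hrpos]; linarith
    have b : 2 * lam / β ≤ 2 * lam / (r * d) := by gcongr
    have c : M / r = d / r + 2 * lam / (r * d) := by
      rw [hM]; field_simp
    rw [c]; linarith
  have hs1 : p * α ≤ 1 := by
    have : p * α ≤ p * (M / r) := by gcongr
    refine this.trans ?_
    rw [← mul_div_assoc, div_le_one hrpos]
    linarith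
  have hf : |p * Gf (p * α) + p * (2 * ph 0)| ≤ p ^ 2 * α := by
    rw [← mul_add, abs_mul, abs_of_pos hp]
    have := mul_le_mul_of_nonneg_left (Gf_bound hs0 hs1) hp.le
    linarith
  rw [← hdd, ← hrr] at h1
  have h2' : β = τ * d ^ 2 + r ^ 2 / τ + 2 * (p * Gf (p * α)) - 4 * lam / β * (P * Gd (p * α)) := by
    rw [hdd, hrr]; exact h2
  constructor
  · have := final_tau hd hp hM0 hr1 hτ hx0 h1 hx hα
    rw [hpp, hrr] at this
    exact this.trans (div_le_div_of_nonneg_right (by linarith) hρ0.le)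
  · have := final_beta hd hp hlam hM0 hr1 hτ hβ hx0 h1 hx hα hf h2'
    exact this.trans (div_le_div_of_nonneg_right (by linarith) hrpos.le)
end
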